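/- Let μ be a σ-finite measure on a measurable space Y, let {f(·;θ) : θ ∈ Θ} be a complete family of probability density functions on Y with respect to μ, and let π : Y → [0,1] be measurable (π(y) is the probability that the single observation is missing given Y = y). Then the following are equivalent: (i) [likelihood ignorability] there exists c ∈ ℝ such that ∫_Y π(y) f(y;θ) dμ(y) = c for all θ ∈ Θ; (ii) [missing completely at random, up to null sets] there exists c ∈ ℝ such that for every θ ∈ Θ, π(y)·f(y;θ) = c·f(y;θ) for μ-almost every y ∈ Y. -/

import Mathlib

open MeasureTheory

/-! Since every density has mass one, `∫ π f(·;θ) = c` for all `θ` says that `π - c` integrates to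
zero against the whole family. Completeness then makes `(π - c) f(·;θ)` vanish almost everywhere,
so the constant missingness probability is the common value `c` of the integrals. -/

/-- Completeness of the family `f` with respect to `μ`, relative to a class `T` of test functions:
the only unbiased estimator of zero in `T` is zero, up to null sets of the family. Taking for `T`
all measurable functions gives completeness, and taking the bounded measurable functions gives
bounded completeness. -/
def IsCompleteFamily {Y Θ 𝕜 : Type*} [MeasurableSpace Y] [RCLike 𝕜] (μ : Measure Y)
    (f : Θ → Y → 𝕜) (T : Set (Y → 𝕜)) : Prop :=
  ∀ t ∈ T, (∀ θ, Integrable (fun y => t y * f θ y) μ) → (∀ θ, ∫ y, t y * f θ y ∂μ = 0) →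
    ∀ θ, ∀ᵐ y ∂μ, t y * f θ y = 0

section

variable {Y Θ 𝕜 : Type*} [MeasurableSpace Y] [RCLike 𝕜] {μ : Measure Y}

theorem integrable_mul_of_mem_Icc {p g : Y → ℝ} (hp : Integrable p μ)
    (hg_meas : AEStronglyMeasurable g μ) {a b : ℝ} (hg : ∀ᵐ y ∂μ, g y ∈ Set.Icc a b) :
    Integrable (fun y => g y * p y) μ :=
  hp.bdd_mul hg_meas (hg.mono fun _ hy => abs_le_max_abs_abs hy.1 hy.2)

theorem integrable_sub_const_mul {g p : Y → 𝕜} (hgp : Integrable (fun y => g y * p y) μ)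
    (hp : Integrable p μ) (c : 𝕜) : Integrable (fun y => (g y - c) * p y) μ := by
  simp only [sub_mul]
  exact hgp.sub (hp.const_mul c)

theorem integral_sub_const_mul {g p : Y → 𝕜} (hgp : Integrable (fun y => g y * p y) μ)
    (hp : Integrable p μ) (c : 𝕜) :
    ∫ y, (g y - c) * p y ∂μ = ∫ y, g y * p y ∂μ - c * ∫ y, p y ∂μ := by
  simp only [sub_mul]
  rw [integral_sub hgp (hp.const_mul c), integral_const_mul]

theorem IsCompleteFamily.integral_mul_eq_iff_ae_eq {f : Θ → Y → 𝕜} {T : Set (Y → 𝕜)}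
    (hf : IsCompleteFamily μ f T) (hf_int : ∀ θ, ∫ y, f θ y ∂μ = 1) {π : Y → 𝕜}
    (hπ : ∀ θ, Integrable (fun y => π y * f θ y) μ) {c : 𝕜} (hc : (fun y => π y - c) ∈ T) :
    (∀ θ, ∫ y, π y * f θ y ∂μ = c) ↔ ∀ θ, ∀ᵐ y ∂μ, π y * f θ y = c * f θ y := by
  have hf_integrable (θ : Θ) : Integrable (f θ) μ :=
    .of_integral_ne_zero (by simp [hf_int θ])
  constructor
  · intro h_integral θ
    have unbiased (θ : Θ) : ∫ y, (π y - c) * f θ y ∂μ = 0 := by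
      rw [integral_sub_const_mul (hπ θ) (hf_integrable θ), h_integral, hf_int, mul_one, sub_self]
    filter_upwards [hf _ hc (fun θ => integrable_sub_const_mul (hπ θ) (hf_integrable θ) c)
      unbiased θ] with y hy
    rwa [sub_mul, sub_eq_zero] at hy
  · intro h_ae θ
    calc ∫ y, π y * f θ y ∂μ = ∫ y, c * f θ y ∂μ := integral_congr_ae (h_ae θ)
      _ = c := by rw [integral_const_mul, hf_int, mul_one]

theorem lig_iff_mcar_general {f : Θ → Y → 𝕜} {T : Set (Y → 𝕜)} (hf : IsCompleteFamily μ f T)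
    (hf_int : ∀ θ, ∫ y, f θ y ∂μ = 1) {π : Y → 𝕜}
    (hπ : ∀ θ, Integrable (fun y => π y * f θ y) μ) (hπT : ∀ c : 𝕜, (fun y => π y - c) ∈ T) :
    (∃ c : 𝕜, ∀ θ, ∫ y, π y * f θ y ∂μ = c) ↔
      ∃ c : 𝕜, ∀ θ, ∀ᵐ y ∂μ, π y * f θ y = c * f θ y :=
  exists_congr fun c => hf.integral_mul_eq_iff_ae_eq hf_int hπ (hπT c)

end

/-- **Remark 5.4** (Lu–Copas): for a scalar response with complete density family,
likelihood ignorability is equivalent to missing completely at random. -/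
theorem lig_iff_mcar
    {Y : Type*} [MeasurableSpace Y] (μ : Measure Y) [SigmaFinite μ]
    {Θ : Type*} (f : Θ → Y → ℝ)
    (hf_meas : ∀ θ, Measurable (f θ))
    (hf_nonneg : ∀ θ y, 0 ≤ f θ y)
    (hf_int : ∀ θ, ∫ y, f θ y ∂μ = 1)
    -- completeness of the family {f(·;θ) : θ ∈ Θ}
    (hf_complete : ∀ t : Y → ℝ, Measurable t →
      (∀ θ, Integrable (fun y => t y * f θ y) μ) →
      (∀ θ, ∫ y, t y * f θ y ∂μ = 0) →
      ∀ θ, ∀ᵐ y ∂μ, t y * f θ y = 0)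
    -- π(y) : probability that the observation is missing given Y = y
    (π : Y → ℝ) (hπ_meas : Measurable π)
    (hπ_nonneg : ∀ y, 0 ≤ π y) (hπ_le_one : ∀ y, π y ≤ 1) :
    -- (i) LIG  ↔  (ii) MCAR (up to null sets)
    (∃ c : ℝ, ∀ θ, ∫ y, π y * f θ y ∂μ = c)
      ↔
    (∃ c : ℝ, ∀ θ, ∀ᵐ y ∂μ, π y * f θ y = c * f θ y) := by
  have h_integrable (θ : Θ) : Integrable (fun y => π y * f θ y) μ :=
    integrable_mul_of_mem_Icc (.of_integral_ne_zero (by simp [hf_int θ]))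
      hπ_meas.aestronglyMeasurable (.of_forall fun y => ⟨hπ_nonneg y, hπ_le_one y⟩)
  exact lig_iff_mcar_general (T := {t | Measurable t}) hf_complete hf_int h_integrable
    hπ_meas.sub_const
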